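/- arXiv:2102.08527 — 6 statements merged into one kernel-verified Lean document; each statement's English description precedes it below -/
import Mathlib

section
/- Every torsion class 𝒯 in mod A is determined by the bricks it contains: 𝒯 equals the smallest torsion class containing the set of bricks belonging to 𝒯; equivalently, in tors A, 𝒯 = ⋁_{B a brick, B ∈ 𝒯} T(B). -/
open CategoryTheory

/-- `𝒯` is a torsion class of finite-dimensional (= finitely generated) left `A`-modules:
a class of finitely generated modules, closed under isomorphism, containing `0`,
closed under quotients and closed under extensions. -/
def IsTorsionClass (A : Type) [Ring A] (𝒯 : Set (ModuleCat.{0} A)) : Prop :=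
  (∀ M ∈ 𝒯, Module.Finite A M) ∧
  (∀ M ∈ 𝒯, ∀ N : ModuleCat.{0} A, Nonempty (M ≃ₗ[A] N) → N ∈ 𝒯) ∧
  (∃ Z ∈ 𝒯, Subsingleton Z) ∧
  (∀ M ∈ 𝒯, ∀ N : ModuleCat.{0} A, ∀ f : M →ₗ[A] N, Function.Surjective f → N ∈ 𝒯) ∧
  (∀ X Y Z : ModuleCat.{0} A, X ∈ 𝒯 → Z ∈ 𝒯 →
    ∀ (f : X →ₗ[A] Y) (g : Y →ₗ[A] Z), Function.Injective f → Function.Surjective g →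
      LinearMap.range f = LinearMap.ker g → Y ∈ 𝒯)

/-- `ℱ` is a torsion-free class: closed under isomorphism, containing `0`,
closed under submodules and closed under extensions. -/
def IsTorsionFreeClass (A : Type) [Ring A] (ℱ : Set (ModuleCat.{0} A)) : Prop :=
  (∀ M ∈ ℱ, Module.Finite A M) ∧
  (∀ M ∈ ℱ, ∀ N : ModuleCat.{0} A, Nonempty (M ≃ₗ[A] N) → N ∈ ℱ) ∧
  (∃ Z ∈ ℱ, Subsingleton Z) ∧
  (∀ M ∈ ℱ, ∀ N : ModuleCat.{0} A, ∀ f : N →ₗ[A] M, Function.Injective f → N ∈ ℱ) ∧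
  (∀ X Y Z : ModuleCat.{0} A, X ∈ ℱ → Z ∈ ℱ →
    ∀ (f : X →ₗ[A] Y) (g : Y →ₗ[A] Z), Function.Injective f → Function.Surjective g →
      LinearMap.range f = LinearMap.ker g → Y ∈ ℱ)

/-- `𝒞⊥ = {Y | Hom(X,Y) = 0 for all X ∈ 𝒞}` (within finite-dimensional modules). -/
def rightPerp (A : Type) [Ring A] (𝒞 : Set (ModuleCat.{0} A)) : Set (ModuleCat.{0} A) :=
  {Y | Module.Finite A Y ∧ ∀ X ∈ 𝒞, ∀ f : X →ₗ[A] Y, f = 0}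

/-- `⊥𝒞 = {X | Hom(X,Y) = 0 for all Y ∈ 𝒞}` (within finite-dimensional modules). -/
def leftPerp (A : Type) [Ring A] (𝒞 : Set (ModuleCat.{0} A)) : Set (ModuleCat.{0} A) :=
  {X | Module.Finite A X ∧ ∀ Y ∈ 𝒞, ∀ f : X →ₗ[A] Y, f = 0}

/-- A brick: a nonzero finite-dimensional module all of whose nonzero endomorphisms
are invertible. -/
def IsBrick (A : Type) [Ring A] (B : ModuleCat.{0} A) : Prop :=
  Module.Finite A B ∧ Nontrivial B ∧ ∀ f : B →ₗ[A] B, f ≠ 0 → Function.Bijective f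

/-- `T(𝒞)`, the smallest torsion class containing `𝒞`. -/
def TgenSet (A : Type) [Ring A] (𝒞 : Set (ModuleCat.{0} A)) : Set (ModuleCat.{0} A) :=
  {X | ∀ 𝒯, IsTorsionClass A 𝒯 → 𝒞 ⊆ 𝒯 → X ∈ 𝒯}

/-- `T(B)`, the smallest torsion class containing the module `B`. -/
def Tgen (A : Type) [Ring A] (B : ModuleCat.{0} A) : Set (ModuleCat.{0} A) :=
  TgenSet A {B}

/-- `F(B)`, the smallest torsion-free class containing the module `B`. -/
def Fgen (A : Type) [Ring A] (B : ModuleCat.{0} A) : Set (ModuleCat.{0} A) :=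
  {X | ∀ ℱ, IsTorsionFreeClass A ℱ → B ∈ ℱ → X ∈ ℱ}

/-- The join of a family of torsion classes in `tors A`: the intersection of all torsion
classes containing every member of the family. -/
def torsJoin (A : Type) [Ring A] (S : Set (Set (ModuleCat.{0} A))) : Set (ModuleCat.{0} A) :=
  {M | ∀ 𝒲, IsTorsionClass A 𝒲 → (∀ 𝒯 ∈ S, 𝒯 ⊆ 𝒲) → M ∈ 𝒲}

/-!
Suppose a torsion class `𝒲` contains every brick of `𝒯` but not some `M ∈ 𝒯`, and let `X` be a
quotient of `M` outside `𝒲` all of whose proper quotients lie in `𝒲`. A nonzero endomorphism `f`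
of `X` with a nonzero kernel would make both `range f ≅ X / ker f` and `X / range f` proper
quotients of `X`, so that `X`, an extension of the latter by the former, would lie in `𝒲`. Hence
the nonzero endomorphisms of `X` are injective, and bijective by finite length: `X` is a brick in
`𝒯` that `𝒲` misses.
-/

open Function

variable {A : Type} [Ring A] {𝒞 𝒯 𝒲 : Set (ModuleCat.{0} A)} {M N X : ModuleCat.{0} A}

namespace IsTorsionClass

lemma mem_of_surjective (h𝒯 : IsTorsionClass A 𝒯) (hM : M ∈ 𝒯) {f : M →ₗ[A] N}
    (hf : Surjective f) : N ∈ 𝒯 :=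
  h𝒯.2.2.2.1 M hM N f hf

lemma mem_of_subsingleton [Subsingleton M] (h𝒯 : IsTorsionClass A 𝒯) : M ∈ 𝒯 :=
  have ⟨_, hZ, _⟩ := h𝒯.2.2.1
  h𝒯.mem_of_surjective hZ (surjective_to_subsingleton (0 : _ →ₗ[A] M))

lemma mem_of_submodule_of_quotient (h𝒯 : IsTorsionClass A 𝒯) (p : Submodule A M)
    (hp : ModuleCat.of A p ∈ 𝒯) (hq : ModuleCat.of A (M ⧸ p) ∈ 𝒯) : M ∈ 𝒯 :=
  h𝒯.2.2.2.2 _ M _ hp hq p.subtype p.mkQ p.injective_subtype p.mkQ_surjective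
    (p.range_subtype.trans p.ker_mkQ.symm)

lemma tgenSet_subset (h𝒯 : IsTorsionClass A 𝒯) (h : 𝒞 ⊆ 𝒯) : TgenSet A 𝒞 ⊆ 𝒯 :=
  fun _ hM ↦ hM 𝒯 h𝒯 h

end IsTorsionClass

/-- The module `X` is minimal among the modules outside the class `𝒞`, with respect to quotients:
it is not in `𝒞`, but all its proper quotients are. A quotient is encoded as a surjective linear
map, and it is proper when this map is not injective. -/
def IsMinimalOutside (𝒞 : Set (ModuleCat.{0} A)) (X : ModuleCat.{0} A) : Prop :=
  X ∉ 𝒞 ∧ ∀ (Y : ModuleCat.{0} A) (g : X →ₗ[A] Y), Surjective g → ¬ Injective g → Y ∈ 𝒞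

lemma exists_quotient_isMinimalOutside [IsNoetherian A M]
    (h𝒞 : ∀ M ∈ 𝒞, ∀ N : ModuleCat.{0} A, Nonempty (M ≃ₗ[A] N) → N ∈ 𝒞) (hM : M ∉ 𝒞) :
    ∃ p : Submodule A M, IsMinimalOutside 𝒞 (ModuleCat.of A (M ⧸ p)) := by
  have h_bot : ModuleCat.of A (M ⧸ (⊥ : Submodule A M)) ∉ 𝒞 := fun h ↦
    hM (h𝒞 _ h M ⟨Submodule.quotEquivOfEqBot ⊥ rfl⟩)
  obtain ⟨p, hp⟩ := exists_maximal_of_wellFoundedGT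
    (fun p : Submodule A M ↦ ModuleCat.of A (M ⧸ p) ∉ 𝒞) ⟨⊥, h_bot⟩
  refine ⟨p, hp.prop, fun Y g hg hg_inj ↦ ?_⟩
  have hp_lt : p < LinearMap.ker (g ∘ₗ p.mkQ) := by
    refine lt_of_le_of_ne ?_ fun h_eq ↦ hg_inj ?_
    · rw [LinearMap.ker_comp]
      exact p.le_comap_mkQ _
    · rw [← LinearMap.ker_eq_bot,
        ← Submodule.map_comap_eq_of_surjective p.mkQ_surjective (LinearMap.ker g),
        ← LinearMap.ker_comp, ← h_eq, p.mkQ_map_self]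
  exact h𝒞 _ (not_not.mp (hp.not_prop_of_gt hp_lt)) Y
    ⟨(g ∘ₗ p.mkQ).quotKerEquivOfSurjective (hg.comp p.mkQ_surjective)⟩

namespace IsMinimalOutside

lemma nontrivial (h𝒲 : IsTorsionClass A 𝒲) (hX : IsMinimalOutside 𝒲 X) : Nontrivial X := by
  by_contra h
  rw [not_nontrivial_iff_subsingleton] at h
  exact hX.1 h𝒲.mem_of_subsingleton

lemma injective_of_ne_zero (h𝒲 : IsTorsionClass A 𝒲) (hX : IsMinimalOutside 𝒲 X)
    {f : X →ₗ[A] X} (hf : f ≠ 0) : Injective f := by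
  by_contra hf_inj
  have h_range : ModuleCat.of A (LinearMap.range f) ∈ 𝒲 :=
    hX.2 _ f.rangeRestrict f.surjective_rangeRestrict
      (hf_inj ∘ f.injective_rangeRestrict_iff.mp)
  have h_quot : ModuleCat.of A (X ⧸ LinearMap.range f) ∈ 𝒲 := by
    refine hX.2 _ (LinearMap.range f).mkQ (Submodule.mkQ_surjective _) ?_
    rwa [← LinearMap.ker_eq_bot, Submodule.ker_mkQ, LinearMap.range_eq_bot]
  exact hX.1 (h𝒲.mem_of_submodule_of_quotient _ h_range h_quot)

lemma isBrick [Module.Finite A X] [IsArtinian A X] (h𝒲 : IsTorsionClass A 𝒲)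
    (hX : IsMinimalOutside 𝒲 X) : IsBrick A X :=
  ⟨inferInstance, hX.nontrivial h𝒲, fun f hf ↦
    IsArtinian.bijective_of_injective_endomorphism f (hX.injective_of_ne_zero h𝒲 hf)⟩

end IsMinimalOutside

lemma IsTorsionClass.exists_quotient_isBrick_notMem (h𝒲 : IsTorsionClass A 𝒲)
    (hfl : IsFiniteLength A M) (hM : M ∉ 𝒲) :
    ∃ p : Submodule A M,
      IsBrick A (ModuleCat.of A (M ⧸ p)) ∧ ModuleCat.of A (M ⧸ p) ∉ 𝒲 := by
  obtain ⟨_, _⟩ := isFiniteLength_iff_isNoetherian_isArtinian.mp hfl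
  obtain ⟨p, hp⟩ := exists_quotient_isMinimalOutside h𝒲.2.1 hM
  exact ⟨p, hp.isBrick h𝒲, hp.1⟩

theorem torsionClass_eq_Tgen_of_bricks_general (h𝒯 : IsTorsionClass A 𝒯)
    (hfl : ∀ M ∈ 𝒯, IsFiniteLength A M) : 𝒯 = TgenSet A {B ∈ 𝒯 | IsBrick A B} := by
  refine Set.Subset.antisymm (fun M hM 𝒲 h𝒲 hbricks ↦ ?_) (h𝒯.tgenSet_subset fun _ hB ↦ hB.1)
  by_contra hM𝒲
  obtain ⟨p, hp_brick, hp_notMem⟩ := h𝒲.exists_quotient_isBrick_notMem (hfl M hM) hM𝒲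
  exact hp_notMem (hbricks ⟨h𝒯.mem_of_surjective hM p.mkQ_surjective, hp_brick⟩)

theorem torsionClass_eq_Tgen_of_bricks
    (k A : Type) [Field k] [Ring A] [Algebra k A] [FiniteDimensional k A]
    (𝒯 : Set (ModuleCat.{0} A)) (h𝒯 : IsTorsionClass A 𝒯) :
    𝒯 = TgenSet A {B ∈ 𝒯 | IsBrick A B} :=
  have : IsArtinianRing A := IsArtinianRing.of_finite k A
  torsionClass_eq_Tgen_of_bricks_general h𝒯 fun M hM ↦
    ((IsArtinianRing.tfae A M).out 0 3).mp (h𝒯.1 M hM)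
end

section
/- (Asai's lemma) Let B be a brick and let X be a module in T(B), the smallest torsion class containing B. Then either there exists a surjective A-module homomorphism X ↠ B, or Hom_A(X,B) = 0. -/
open CategoryTheory

/-!
For a fixed module `B`, the finitely generated modules `M` such that every homomorphism `M → B` is
zero or surjective form a torsion class. The point is closure under extensions
`0 → L → M → N → 0`: a homomorphism `h : M → B` which is surjective on `L` is surjective, and one
which is zero on `L` factors through `N`. A brick `B` lies in this torsion class, hence so does all
of `T(B)`.
-/

/-- Every homomorphism `M → B` is zero or surjective. For fixed `B`, the finitely generated such `M`
are the torsion class against which `T(B)` is tested. -/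
def HomZeroOrSurjective (R M B : Type*) [Semiring R] [AddCommMonoid M] [Module R M]
    [AddCommMonoid B] [Module R B] : Prop :=
  ∀ f : M →ₗ[R] B, f = 0 ∨ Function.Surjective f

section Semiring

variable {R M N B : Type*} [Semiring R] [AddCommMonoid M] [Module R M]
  [AddCommMonoid N] [Module R N] [AddCommMonoid B] [Module R B]

theorem HomZeroOrSurjective.of_surjective (hM : HomZeroOrSurjective R M B) {g : M →ₗ[R] N}
    (hg : Function.Surjective g) : HomZeroOrSurjective R N B := by
  intro h
  rcases hM (h ∘ₗ g) with hzero | hsurj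
  · exact Or.inl ((LinearMap.cancel_right hg).1 (hzero.trans (LinearMap.zero_comp g).symm))
  · exact Or.inr (Function.Surjective.of_comp hsurj)

theorem HomZeroOrSurjective.exists_surjective_or_forall_eq_zero
    (hM : HomZeroOrSurjective R M B) :
    (∃ f : M →ₗ[R] B, Function.Surjective f) ∨ ∀ f : M →ₗ[R] B, f = 0 :=
  (em _).imp_right fun hnone f ↦ (hM f).resolve_right fun hf ↦ hnone ⟨f, hf⟩

end Semiring

section Extension

variable {R L M N B : Type*} [Ring R] [AddCommGroup L] [Module R L] [AddCommGroup M] [Module R M]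
  [AddCommGroup N] [Module R N] [AddCommGroup B] [Module R B] {f : L →ₗ[R] M} {g : M →ₗ[R] N}

theorem exists_comp_eq_of_exact_of_comp_eq_zero (hfg : Function.Exact f g)
    (hg : Function.Surjective g) {h : M →ₗ[R] B} (hf : h ∘ₗ f = 0) :
    ∃ h' : N →ₗ[R] B, h' ∘ₗ g = h := by
  refine ⟨(LinearMap.range f).liftQ h (LinearMap.range_le_ker_iff.2 hf) ∘ₗ
    (hfg.linearEquivOfSurjective hg).symm, ?_⟩
  ext x
  simp

theorem HomZeroOrSurjective.of_exact (hL : HomZeroOrSurjective R L B)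
    (hN : HomZeroOrSurjective R N B) (hfg : Function.Exact f g) (hg : Function.Surjective g) :
    HomZeroOrSurjective R M B := by
  intro h
  rcases hL (h ∘ₗ f) with hzero | hsurj
  · obtain ⟨h', rfl⟩ := exists_comp_eq_of_exact_of_comp_eq_zero hfg hg hzero
    exact (hN h').imp (fun h'_zero ↦ by rw [h'_zero, LinearMap.zero_comp])
      (fun h'_surj ↦ h'_surj.comp hg)
  · exact Or.inr (Function.Surjective.of_comp hsurj)

end Extension

theorem IsBrick.homZeroOrSurjective {A : Type} [Ring A] {B : ModuleCat.{0} A} (hB : IsBrick A B) :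
    HomZeroOrSurjective A B B :=
  fun f ↦ or_iff_not_imp_left.2 fun hf ↦ (hB.2.2 f hf).surjective

section TorsionClass

variable {A : Type} [Ring A]

theorem isTorsionClass_setOf_homZeroOrSurjective (B : Type*) [AddCommGroup B] [Module A B] :
    IsTorsionClass A {M | Module.Finite A M ∧ HomZeroOrSurjective A M B} := by
  refine ⟨fun M hM ↦ hM.1, ?iso, ?zero, ?quotient, ?extension⟩
  case iso =>
    rintro M ⟨_, hM⟩ N ⟨e⟩
    exact ⟨Module.Finite.equiv e, hM.of_surjective (g := e.toLinearMap) e.surjective⟩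
  case zero =>
    exact ⟨ModuleCat.of A PUnit, ⟨inferInstanceAs (Module.Finite A PUnit),
      fun f ↦ Or.inl (Subsingleton.elim _ _)⟩, inferInstanceAs (Subsingleton PUnit)⟩
  case quotient =>
    rintro M ⟨_, hM⟩ N g hg
    exact ⟨Module.Finite.of_surjective g hg, hM.of_surjective hg⟩
  case extension =>
    rintro L M N ⟨_, hL⟩ ⟨_, hN⟩ f g - hg hrange
    have hfg : Function.Exact f g := LinearMap.exact_iff.2 hrange.symm
    exact ⟨Module.Finite.of_exact hfg hg, hL.of_exact hN hfg hg⟩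

theorem asai_lemma_general {B : Type*} [AddCommGroup B] [Module A B] {𝒞 : Set (ModuleCat.{0} A)}
    (hfin : ∀ C ∈ 𝒞, Module.Finite A C) (h𝒞 : ∀ C ∈ 𝒞, HomZeroOrSurjective A C B)
    {X : ModuleCat.{0} A} (hX : X ∈ TgenSet A 𝒞) : HomZeroOrSurjective A X B :=
  (hX _ (isTorsionClass_setOf_homZeroOrSurjective B) fun C hC ↦ ⟨hfin C hC, h𝒞 C hC⟩).2

end TorsionClass

theorem asai_lemma
    (k A : Type) [Field k] [Ring A] [Algebra k A] [FiniteDimensional k A]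
    (B X : ModuleCat.{0} A) (hB : IsBrick A B) (hX : X ∈ Tgen A B) :
    (∃ f : X →ₗ[A] B, Function.Surjective f) ∨ (∀ f : X →ₗ[A] B, f = 0) := by
  have hXB : HomZeroOrSurjective A X B := asai_lemma_general
    (by rintro _ rfl; exact hB.1) (by rintro _ rfl; exact hB.homZeroOrSurjective) hX
  exact hXB.exists_surjective_or_forall_eq_zero
end

section
/- Let L be a completely join semidistributive complete lattice and let x ⋖ y be a covering pair in L (x < y and no z with x < z < y). Then there exists a unique completely join irreducible element j ∈ L such that x ⊔ j = y and x ⊔ j_* = x (where j_* = ⋁{z | z < j}); moreover j is the minimum of the set {z ∈ L | x ⊔ z = y}. -/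
/-- A complete lattice is completely join semidistributive if whenever `x ⊔ y = z` for all
`y` in a nonempty set `S`, also `x ⊔ ⋀S = z`. -/
def CompletelyJoinSemidistributive (L : Type*) [CompleteLattice L] : Prop :=
  ∀ (x z : L) (S : Set L), S.Nonempty → (∀ y ∈ S, x ⊔ y = z) → x ⊔ sInf S = z

/-- A complete lattice is completely meet semidistributive if whenever `x ⊓ y = z` for all
`y` in a nonempty set `S`, also `x ⊓ ⋁S = z`. -/
def CompletelyMeetSemidistributive (L : Type*) [CompleteLattice L] : Prop :=
  ∀ (x z : L) (S : Set L), S.Nonempty → (∀ y ∈ S, x ⊓ y = z) → x ⊓ sSup S = z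

/-- `j` is completely join irreducible: `⋁{y | y < j} < j`. -/
def CompletelyJoinIrreducible {L : Type*} [CompleteLattice L] (j : L) : Prop :=
  sSup {y | y < j} < j

/-- `j_* = ⋁{y | y < j}`. -/
def jStar {L : Type*} [CompleteLattice L] (j : L) : L :=
  sSup {y | y < j}

/-- `m` is completely meet irreducible: `m < ⋀{y | m < y}`. -/
def CompletelyMeetIrreducible {L : Type*} [CompleteLattice L] (m : L) : Prop :=
  m < sInf {y | m < y}

/-- `m^* = ⋀{y | m < y}`. -/
def mStar {L : Type*} [CompleteLattice L] (m : L) : L :=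
  sInf {y | m < y}

/-!
In any complete lattice, the elements `j` with `x ⊔ j = y` and `x ⊔ j_* = x` that label a cover
`x ⋖ y` are exactly the minimal elements of the fibre `{z | x ⊔ z = y}`: an element `z ≤ y` lies
outside this fibre if and only if `z ≤ x`. Complete join semidistributivity gives the fibre a least
element, which is then its only minimal element.
-/

theorem sup_ne_iff_le_of_covBy {L : Type*} [SemilatticeSup L] {x y z : L} (hxy : x ⋖ y)
    (hz : z ≤ y) : x ⊔ z ≠ y ↔ z ≤ x := by
  constructor
  · intro hne
    exact sup_eq_left.1 ((hxy.eq_or_eq le_sup_left (sup_le hxy.le hz)).resolve_right hne)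
  · intro hzx
    rw [sup_eq_left.2 hzx]
    exact hxy.ne

section CompleteLattice

variable {L : Type*} [CompleteLattice L] {x y j : L}

theorem jStar_le_iff : jStar j ≤ x ↔ ∀ z < j, z ≤ x :=
  sSup_le_iff

theorem completelyJoinIrreducible_of_jStar_le (hstar : jStar j ≤ x) (hj : ¬j ≤ x) :
    CompletelyJoinIrreducible j :=
  lt_of_le_of_ne (jStar_le_iff.2 fun _ hz => hz.le) fun heq => hj (heq.symm.trans_le hstar)

theorem minimal_sup_eq_iff_of_covBy (hxy : x ⋖ y) :
    Minimal (fun z => x ⊔ z = y) j ↔ x ⊔ j = y ∧ x ⊔ jStar j = x := by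
  rw [minimal_iff_forall_lt, sup_eq_left, jStar_le_iff]
  refine and_congr_right fun hj => forall₂_congr fun z hz => ?_
  exact sup_ne_iff_le_of_covBy hxy (hz.le.trans (hj ▸ le_sup_right))

theorem completelyJoinIrreducible_of_minimal_sup_eq (hxy : x ⋖ y)
    (hj : Minimal (fun z => x ⊔ z = y) j) : CompletelyJoinIrreducible j := by
  obtain ⟨hjoin, hstar⟩ := (minimal_sup_eq_iff_of_covBy hxy).1 hj
  have hjy : j ≤ y := hjoin ▸ le_sup_right
  have hjx : ¬j ≤ x := fun hle => (sup_ne_iff_le_of_covBy hxy hjy).2 hle hjoin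
  exact completelyJoinIrreducible_of_jStar_le (sup_eq_left.1 hstar) hjx

theorem CompletelyJoinSemidistributive.isLeast_sInf_sup_eq
    (hL : CompletelyJoinSemidistributive L) (hxy : x ≤ y) :
    IsLeast {z | x ⊔ z = y} (sInf {z | x ⊔ z = y}) :=
  ⟨hL x y _ ⟨y, sup_eq_right.2 hxy⟩ fun _ hz => hz, fun _ hz => sInf_le hz⟩

end CompleteLattice

theorem cover_has_unique_cji_label {L : Type*} [CompleteLattice L]
    (hL : CompletelyJoinSemidistributive L) (x y : L) (hxy : x ⋖ y) :
    ∃ j : L, (CompletelyJoinIrreducible j ∧ x ⊔ j = y ∧ x ⊔ jStar j = x) ∧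
      (∀ z, x ⊔ z = y → j ≤ z) ∧
      (∀ j', CompletelyJoinIrreducible j' → x ⊔ j' = y → x ⊔ jStar j' = x → j' = j) := by
  have hleast := hL.isLeast_sInf_sup_eq hxy.le
  have hmin : Minimal (fun z => x ⊔ z = y) (sInf {z | x ⊔ z = y}) := hleast.minimal
  refine ⟨sInf {z | x ⊔ z = y}, ⟨?_, ?_⟩, fun z hz => hleast.2 hz, fun j' _ hjoin hstar => ?_⟩
  · exact completelyJoinIrreducible_of_minimal_sup_eq hxy hmin
  · exact (minimal_sup_eq_iff_of_covBy hxy).1 hmin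
  · have hmin' : Minimal (fun z => x ⊔ z = y) j' :=
      (minimal_sup_eq_iff_of_covBy hxy).2 ⟨hjoin, hstar⟩
    exact hleast.minimal_iff.1 hmin'
end

section
/- Let L be a completely semidistributive complete lattice. Then the maps κ and κ^d are mutually inverse bijections between the set of completely join irreducible elements of L and the set of completely meet irreducible elements of L, where for a completely join irreducible j, κ(j) is the unique completely meet irreducible m with m ⊓ j = j_* and m^* ⊓ j = j (equivalently m = μ(j ⋗ j_*)), and for a completely meet irreducible m, κ^d(m) is the unique completely join irreducible element γ(m^* ⋗ m) associated to the cover m^* ⋗ m. -/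
/-!
For a cover `x ⋖ y` the elements `z` with `z ⊓ y = x` are exactly those with `x ≤ z` and `¬ y ≤ z`.
Their maximal elements are the `m` with `m ⊓ y = x` and `m^* ⊓ y = y`, because `y ≤ m^*` says that
every element above `m` is above `y`. Complete meet semidistributivity provides a greatest one,
which is therefore `μ(y ⋗ x)`; order duality gives `γ(y ⋗ x)`. Now `κ(j) = μ(j ⋗ j_*)` and
`κ^d(m) = γ(m^* ⋗ m)`, and the equations relating `j` and `m` in either definition say
`j_* ≤ m`, `¬ j ≤ m` and `j ≤ m^*`, a self-dual condition. So the two maps have inverse graphs.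
-/

theorem inf_eq_iff_of_covBy {α : Type*} [SemilatticeInf α] {x y z : α} (h : x ⋖ y) :
    z ⊓ y = x ↔ x ≤ z ∧ ¬ y ≤ z := by
  constructor
  · rintro rfl
    exact ⟨inf_le_left, fun hyz => h.ne (inf_eq_right.2 hyz)⟩
  · rintro ⟨hxz, hyz⟩
    exact (h.eq_or_eq (le_inf hxz h.le) inf_le_right).resolve_right (mt inf_eq_right.1 hyz)

theorem sup_eq_iff_of_covBy {α : Type*} [SemilatticeSup α] {x y z : α} (h : x ⋖ y) :
    x ⊔ z = y ↔ z ≤ y ∧ ¬ z ≤ x := by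
  rw [sup_comm]
  exact inf_eq_iff_of_covBy h.toDual

section Kappa

variable {L : Type*} [CompleteLattice L] {j m x y : L}

theorem le_mStar (m : L) : m ≤ mStar m :=
  le_sInf fun _ => le_of_lt

theorem mStar_le_of_lt (h : m < x) : mStar m ≤ x :=
  sInf_le h

theorem CompletelyMeetIrreducible.covBy_mStar (hm : CompletelyMeetIrreducible m) :
    m ⋖ mStar m :=
  ⟨hm, fun _ hmx => (mStar_le_of_lt hmx).not_gt⟩

theorem CompletelyJoinIrreducible.jStar_covBy (hj : CompletelyJoinIrreducible j) :
    jStar j ⋖ j :=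
  (CompletelyMeetIrreducible.covBy_mStar (L := Lᵒᵈ) hj).ofDual

theorem maximal_inf_eq_iff_of_covBy (h : x ⋖ y) :
    Maximal (· ∈ {z | z ⊓ y = x}) m ↔ m ⊓ y = x ∧ mStar m ⊓ y = y := by
  constructor
  · intro hmax
    refine ⟨hmax.prop, inf_eq_right.2 (le_sInf fun z (hmz : m < z) => ?_)⟩
    by_contra hyz
    have hxz : x ≤ z := ((inf_eq_iff_of_covBy h).1 hmax.prop).1.trans hmz.le
    exact hmax.not_prop_of_gt hmz ((inf_eq_iff_of_covBy h).2 ⟨hxz, hyz⟩)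
  · rintro ⟨hmx, hmy⟩
    refine ⟨hmx, fun z hz hmz => ?_⟩
    by_contra hzm
    have hyz : y ≤ z := (inf_eq_right.1 hmy).trans (mStar_le_of_lt (hmz.lt_of_not_ge hzm))
    exact ((inf_eq_iff_of_covBy h).1 hz).2 hyz

theorem completelyMeetIrreducible_of_inf_eq (hxy : x ≠ y) (hx : m ⊓ y = x)
    (hy : mStar m ⊓ y = y) : CompletelyMeetIrreducible m := by
  refine (le_mStar m).lt_of_ne fun hm => hxy ?_
  rw [← hx, hm, hy]

theorem CompletelyMeetSemidistributive.isGreatest_sSup_inf_eq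
    (hL : CompletelyMeetSemidistributive L) (hne : {z | z ⊓ y = x}.Nonempty) :
    IsGreatest {z | z ⊓ y = x} (sSup {z | z ⊓ y = x}) := by
  refine ⟨?_, fun _ => le_sSup⟩
  rw [Set.mem_ofPred_eq, inf_comm]
  exact hL y x _ hne fun z hz => inf_comm y z ▸ hz

theorem CompletelyMeetSemidistributive.existsUnique_completelyMeetIrreducible_of_covBy
    (hL : CompletelyMeetSemidistributive L) (h : x ⋖ y) :
    ∃! m : L, CompletelyMeetIrreducible m ∧ m ⊓ y = x ∧ mStar m ⊓ y = y := by
  have hgreatest := hL.isGreatest_sSup_inf_eq ⟨x, inf_eq_left.2 h.le⟩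
  obtain ⟨hx, hy⟩ := (maximal_inf_eq_iff_of_covBy h).1 hgreatest.maximal
  refine ⟨_, ⟨completelyMeetIrreducible_of_inf_eq h.ne hx hy, hx, hy⟩, ?_⟩
  rintro m ⟨-, hm⟩
  exact hgreatest.maximal_iff.1 ((maximal_inf_eq_iff_of_covBy h).2 hm)

theorem CompletelyJoinSemidistributive.dual (hL : CompletelyJoinSemidistributive L) :
    CompletelyMeetSemidistributive Lᵒᵈ :=
  hL

theorem CompletelyJoinSemidistributive.existsUnique_completelyJoinIrreducible_of_covBy
    (hL : CompletelyJoinSemidistributive L) (h : x ⋖ y) :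
    ∃! j : L, CompletelyJoinIrreducible j ∧ x ⊔ j = y ∧ x ⊔ jStar j = x := by
  simp only [sup_comm x]
  exact hL.dual.existsUnique_completelyMeetIrreducible_of_covBy h.toDual

theorem inf_eq_jStar_iff_sup_eq_mStar (hj : CompletelyJoinIrreducible j)
    (hm : CompletelyMeetIrreducible m) :
    (m ⊓ j = jStar j ∧ mStar m ⊓ j = j) ↔ (m ⊔ j = mStar m ∧ m ⊔ jStar j = m) :=
  calc
    (m ⊓ j = jStar j ∧ mStar m ⊓ j = j) ↔ (jStar j ≤ m ∧ ¬ j ≤ m) ∧ j ≤ mStar m := by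
      rw [inf_eq_iff_of_covBy hj.jStar_covBy, inf_eq_right]
    _ ↔ (j ≤ mStar m ∧ ¬ j ≤ m) ∧ jStar j ≤ m := by tauto
    _ ↔ (m ⊔ j = mStar m ∧ m ⊔ jStar j = m) := by
      rw [sup_eq_iff_of_covBy hm.covBy_mStar, sup_eq_left]

end Kappa

theorem kappa_bijection {L : Type*} [CompleteLattice L]
    (hj : CompletelyJoinSemidistributive L) (hm : CompletelyMeetSemidistributive L) :
    (∀ j : L, CompletelyJoinIrreducible j →
      ∃! m : L, CompletelyMeetIrreducible m ∧ m ⊓ j = jStar j ∧ mStar m ⊓ j = j) ∧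
    (∀ m : L, CompletelyMeetIrreducible m →
      ∃! j : L, CompletelyJoinIrreducible j ∧ m ⊔ j = mStar m ∧ m ⊔ jStar j = m) ∧
    (∀ j m : L, CompletelyJoinIrreducible j → CompletelyMeetIrreducible m →
      ((m ⊓ j = jStar j ∧ mStar m ⊓ j = j) ↔ (m ⊔ j = mStar m ∧ m ⊔ jStar j = m))) := by
  exact ⟨fun _ hirr => hm.existsUnique_completelyMeetIrreducible_of_covBy hirr.jStar_covBy,
    fun _ hirr => hj.existsUnique_completelyJoinIrreducible_of_covBy hirr.covBy_mStar,
    fun _ _ => inf_eq_jStar_iff_sup_eq_mStar⟩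
end

section
/- Let L be a completely semidistributive complete lattice. Then for every covering pair y ⋗ x in L, one has μ(y ⋗ x) = κ(γ(y ⋗ x)); that is, the completely meet irreducible label of a cover is the image under κ of its completely join irreducible label. -/
/-!
The element `x ⊓ j` lies strictly below `j`, because `x ⊔ j = y ≠ x`, and it is above `j_*`, so it
equals `j_*`: the interval `[j_*, j]` is perspective to `[x, y]`. Hence `m ⊓ y = x` restricts along
`j ≤ y` to `m ⊓ j = x ⊓ j = j_*`, and `y ≤ m^*` restricts to `j ≤ m^*`.
-/

section JStar

variable {L : Type*} [CompleteLattice L] {j x z : L}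

theorem jStar_le (j : L) : jStar j ≤ j :=
  sSup_le fun _ hz => le_of_lt hz

theorem le_jStar_of_lt (hz : z < j) : z ≤ jStar j :=
  le_sSup hz

theorem inf_eq_jStar (hx : jStar j ≤ x) (hjx : ¬j ≤ x) : x ⊓ j = jStar j :=
  le_antisymm (le_jStar_of_lt (inf_lt_right.mpr hjx)) (le_inf hx (jStar_le j))

end JStar

theorem mu_eq_kappa_gamma_general {L : Type*} [CompleteLattice L] {x y j m : L} (hxy : x < y)
    (hgamma : x ⊔ j = y ∧ x ⊔ jStar j = x) (hmu : m ⊓ y = x ∧ mStar m ⊓ y = y) :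
    m ⊓ j = jStar j ∧ mStar m ⊓ j = j := by
  obtain ⟨hsup, hsup_star⟩ := hgamma
  obtain ⟨hinf, hinf_star⟩ := hmu
  have hjy : j ≤ y := hsup ▸ le_sup_right
  have hjx : ¬j ≤ x := left_lt_sup.mp (hxy.trans_eq hsup.symm)
  have hinf_j : m ⊓ j = jStar j :=
    calc
      m ⊓ j = m ⊓ (y ⊓ j) := by rw [inf_eq_right.mpr hjy]
      _ = x ⊓ j := by rw [← inf_assoc, hinf]
      _ = jStar j := inf_eq_jStar (sup_eq_left.mp hsup_star) hjx
  exact ⟨hinf_j, inf_eq_right.mpr (hjy.trans (inf_eq_right.mp hinf_star))⟩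

theorem mu_eq_kappa_gamma {L : Type*} [CompleteLattice L]
    (hj : CompletelyJoinSemidistributive L) (hm : CompletelyMeetSemidistributive L)
    (x y : L) (hxy : x ⋖ y) (j m : L)
    (hgamma : CompletelyJoinIrreducible j ∧ x ⊔ j = y ∧ x ⊔ jStar j = x)
    (hmu : CompletelyMeetIrreducible m ∧ m ⊓ y = x ∧ mStar m ⊓ y = y) :
    m ⊓ j = jStar j ∧ mStar m ⊓ j = j :=
  mu_eq_kappa_gamma_general hxy.lt hgamma.2 hmu.2
end

section
/- (Demonet–Iyama–Reading–Reiten–Thomas) Let I be a two-sided ideal of A, and identify mod A/I with the full subcategory of mod A consisting of modules annihilated by I. If (𝒯, ℱ) is a torsion pair in mod A (i.e. 𝒯⊥ = ℱ and ⊥ℱ = 𝒯), then (𝒯 ∩ mod A/I, ℱ ∩ mod A/I) is a torsion pair in mod A/I: the perpendicular of 𝒯 ∩ mod A/I computed inside mod A/I equals ℱ ∩ mod A/I, and the left perpendicular of ℱ ∩ mod A/I inside mod A/I equals 𝒯 ∩ mod A/I. -/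
open CategoryTheory

/-- The modules in `mod A` annihilated by the two-sided ideal `I`, i.e. `mod A/I`. -/
def modAnn (A : Type) [Ring A] (I : TwoSidedIdeal A) : Set (ModuleCat.{0} A) :=
  {M | Module.Finite A M ∧ ∀ a ∈ I, ∀ m : M, a • m = 0}

/-! Perpendicularity only has to be tested on images. A map `f : X → Y` with `X ∈ 𝒯` and `Y`
annihilated by `I` has its range in `𝒯`, as a quotient of `X`, and annihilated by `I`, as a
submodule of `Y`; so the inclusion of the range, and with it `f`, vanishes as soon as `Y` is
perpendicular to `𝒯 ∩ mod A/I`. Dually, if `Y ∈ ℱ` and `X` is annihilated by `I`, the range of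
`f` lies in `ℱ ∩ mod A/I`, and one uses the projection of `X` onto it. Of `mod A/I` only the closure
under quotients and finitely generated submodules matters. -/

/-- Closure of a class of modules under quotients, encoded as targets of surjections so that it
includes closure under isomorphism. -/
def IsQuotientClosed (A : Type) [Ring A] (𝒞 : Set (ModuleCat.{0} A)) : Prop :=
  ∀ ⦃M N : ModuleCat.{0} A⦄ (f : M →ₗ[A] N), Function.Surjective f → M ∈ 𝒞 → N ∈ 𝒞

/-- Closure of a class of modules under finitely generated submodules, encoded as sources of
injections. Over a Noetherian ring, for a class of finitely generated modules, this is closure under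
all submodules; in general, finite generation keeps the submodules inside `mod A`. -/
def IsFGSubmoduleClosed (A : Type) [Ring A] (𝒞 : Set (ModuleCat.{0} A)) : Prop :=
  ∀ ⦃M N : ModuleCat.{0} A⦄ (f : N →ₗ[A] M),
    Function.Injective f → Module.Finite A N → M ∈ 𝒞 → N ∈ 𝒞

/-- The right perpendicular of `𝒞` computed inside the full subcategory `𝒮` of the category of
modules. -/
def rightPerpIn (A : Type) [Ring A] (𝒮 𝒞 : Set (ModuleCat.{0} A)) : Set (ModuleCat.{0} A) :=
  {Y | Y ∈ 𝒮 ∧ ∀ X ∈ 𝒞, ∀ f : X →ₗ[A] Y, f = 0}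

/-- The left perpendicular of `𝒞` computed inside the full subcategory `𝒮` of the category of
modules. -/
def leftPerpIn (A : Type) [Ring A] (𝒮 𝒞 : Set (ModuleCat.{0} A)) : Set (ModuleCat.{0} A) :=
  {X | X ∈ 𝒮 ∧ ∀ Y ∈ 𝒞, ∀ f : X →ₗ[A] Y, f = 0}

section

variable {A : Type} [Ring A]

theorem isQuotientClosed_leftPerp (𝒞 : Set (ModuleCat.{0} A)) :
    IsQuotientClosed A (leftPerp A 𝒞) := by
  rintro M N f hf ⟨hM, hM𝒞⟩
  refine ⟨Module.Finite.of_surjective f hf, fun Y hY g => ?_⟩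
  rw [← LinearMap.cancel_right hf, hM𝒞 Y hY (g ∘ₗ f), LinearMap.zero_comp]

theorem isFGSubmoduleClosed_rightPerp (𝒞 : Set (ModuleCat.{0} A)) :
    IsFGSubmoduleClosed A (rightPerp A 𝒞) := by
  rintro M N f hf hN ⟨-, hM𝒞⟩
  refine ⟨hN, fun X hX g => ?_⟩
  rw [← LinearMap.cancel_left hf, hM𝒞 X hX (f ∘ₗ g), LinearMap.comp_zero]

theorem isQuotientClosed_modAnn (I : TwoSidedIdeal A) : IsQuotientClosed A (modAnn A I) := by
  rintro M N f hf ⟨hM, hIM⟩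
  refine ⟨Module.Finite.of_surjective f hf, fun a ha => hf.forall.2 fun m => ?_⟩
  rw [← map_smul, hIM a ha, map_zero]

theorem isFGSubmoduleClosed_modAnn (I : TwoSidedIdeal A) :
    IsFGSubmoduleClosed A (modAnn A I) := by
  rintro M N f hf hN ⟨-, hIM⟩
  refine ⟨hN, fun a ha n => hf ?_⟩
  rw [map_smul, hIM a ha, map_zero]

variable {𝒮 𝒯 ℱ : Set (ModuleCat.{0} A)}

theorem rightPerpIn_inter (h𝒮fin : ∀ M ∈ 𝒮, Module.Finite A M)
    (h𝒮 : IsFGSubmoduleClosed A 𝒮) (h𝒯fin : ∀ M ∈ 𝒯, Module.Finite A M)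
    (h𝒯 : IsQuotientClosed A 𝒯) :
    rightPerpIn A 𝒮 (𝒯 ∩ 𝒮) = rightPerp A 𝒯 ∩ 𝒮 := by
  ext Y
  constructor
  · rintro ⟨hY, hperp⟩
    refine ⟨⟨h𝒮fin Y hY, fun X hX f => ?_⟩, hY⟩
    let R : ModuleCat.{0} A := ModuleCat.of A f.range
    have hR𝒯 : R ∈ 𝒯 := h𝒯 (N := R) f.rangeRestrict f.surjective_rangeRestrict hX
    have hR𝒮 : R ∈ 𝒮 := h𝒮 (N := R) f.range.subtype Subtype.val_injective (h𝒯fin R hR𝒯) hY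
    have hincl : f.range.subtype = 0 := hperp R ⟨hR𝒯, hR𝒮⟩ f.range.subtype
    exact LinearMap.ext fun x => LinearMap.congr_fun hincl (f.rangeRestrict x)
  · rintro ⟨⟨-, hperp⟩, hY⟩
    exact ⟨hY, fun X hX => hperp X hX.1⟩

theorem leftPerpIn_inter (h𝒮fin : ∀ M ∈ 𝒮, Module.Finite A M)
    (h𝒮 : IsQuotientClosed A 𝒮) (hℱ : IsFGSubmoduleClosed A ℱ) :
    leftPerpIn A 𝒮 (ℱ ∩ 𝒮) = leftPerp A ℱ ∩ 𝒮 := by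
  ext X
  constructor
  · rintro ⟨hX, hperp⟩
    refine ⟨⟨h𝒮fin X hX, fun Y hY f => ?_⟩, hX⟩
    let R : ModuleCat.{0} A := ModuleCat.of A f.range
    have hR𝒮 : R ∈ 𝒮 := h𝒮 (N := R) f.rangeRestrict f.surjective_rangeRestrict hX
    have hRℱ : R ∈ ℱ := hℱ (N := R) f.range.subtype Subtype.val_injective (h𝒮fin R hR𝒮) hY
    have hproj : f.rangeRestrict = 0 := hperp R ⟨hRℱ, hR𝒮⟩ f.rangeRestrict
    exact LinearMap.ext fun x => congrArg Subtype.val (LinearMap.congr_fun hproj x)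
  · rintro ⟨⟨-, hperp⟩, hX⟩
    exact ⟨hX, fun Y hY => hperp Y hY.1⟩

end

theorem torsionPair_restricts_to_quotient_general (A : Type) [Ring A]
    (𝒮 𝒯 ℱ : Set (ModuleCat.{0} A)) (h𝒮fin : ∀ M ∈ 𝒮, Module.Finite A M)
    (h𝒮quot : IsQuotientClosed A 𝒮) (h𝒮sub : IsFGSubmoduleClosed A 𝒮)
    (hTF : rightPerp A 𝒯 = ℱ) (hFT : leftPerp A ℱ = 𝒯) :
    rightPerpIn A 𝒮 (𝒯 ∩ 𝒮) = ℱ ∩ 𝒮 ∧ leftPerpIn A 𝒮 (ℱ ∩ 𝒮) = 𝒯 ∩ 𝒮 := by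
  have h𝒯fin : ∀ M ∈ 𝒯, Module.Finite A M := hFT ▸ fun _ hM => hM.1
  have h𝒯quot : IsQuotientClosed A 𝒯 := hFT ▸ isQuotientClosed_leftPerp ℱ
  have hℱsub : IsFGSubmoduleClosed A ℱ := hTF ▸ isFGSubmoduleClosed_rightPerp 𝒯
  exact ⟨by rw [rightPerpIn_inter h𝒮fin h𝒮sub h𝒯fin h𝒯quot, hTF],
    by rw [leftPerpIn_inter h𝒮fin h𝒮quot hℱsub, hFT]⟩

theorem torsionPair_restricts_to_quotient
    (k A : Type) [Field k] [Ring A] [Algebra k A] [FiniteDimensional k A]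
    (I : TwoSidedIdeal A) (𝒯 ℱ : Set (ModuleCat.{0} A))
    (h𝒯 : IsTorsionClass A 𝒯) (hTF : rightPerp A 𝒯 = ℱ) (hFT : leftPerp A ℱ = 𝒯) :
    {Y | Y ∈ modAnn A I ∧ ∀ X ∈ 𝒯 ∩ modAnn A I, ∀ f : X →ₗ[A] Y, f = 0}
        = ℱ ∩ modAnn A I ∧
    {X | X ∈ modAnn A I ∧ ∀ Y ∈ ℱ ∩ modAnn A I, ∀ f : X →ₗ[A] Y, f = 0}
        = 𝒯 ∩ modAnn A I :=
  torsionPair_restricts_to_quotient_general A (modAnn A I) 𝒯 ℱ (fun _ hM => hM.1)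
    (isQuotientClosed_modAnn I) (isFGSubmoduleClosed_modAnn I) hTF hFT
end
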